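/- arXiv:2309.11788 — 2 statements merged into one kernel-verified Lean document; each statement's English description precedes it below -/
import Mathlib

section
/- For the decreasing permutation dec_n = n(n−1)⋯1 (whose inversion graph is the complete graph on {1,…,n}), a 1-subgraph S is valid if and only if S is a non-crossing matching. Consequently, Ψ_{Sub→PF} restricts to a bijection from the set NonCross_n of non-crossing matchings on {1,…,n} onto the fibre Fib_n(dec_n). -/
/- Common definitions: the classical and MVP parking processes, parking
functions, inversion graphs and 1-subgraphs, Motzkin paths, and sandpile
configurations on complete graphs. Spots, cars and vertices are 0-indexed
(element `i : Fin n` corresponds to the 1-indexed `i+1` of the paper). -/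

namespace MVPPaper

open Finset

variable {n : ℕ}

/-- The first unoccupied spot `k ≥ s` in the occupancy `occ`, if any exists.
`occ k = some i` means spot `k` is occupied by car `i`. -/
def firstFree (occ : Fin n → Option (Fin n)) (s : Fin n) : Option (Fin n) :=
  (List.finRange n).find? fun k => decide (s ≤ k) && (occ k).isNone

/-- One step of the classical parking process: car `i`, preferring spot `s`,
parks in the first free spot `k ≥ s` (failure if none exists). -/
def classicalStep (occ : Fin n → Option (Fin n)) (i s : Fin n) :
    Option (Fin n → Option (Fin n)) :=
  (firstFree occ s).map fun k => Function.update occ k (some i)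

/-- One step of the MVP parking process: car `i` parks in its preferred spot
`s`; if `s` was occupied by an earlier car `j`, then `j` is bumped out and
drives on to the first free spot `k ≥ s` (failure if none exists). -/
def mvpStep (occ : Fin n → Option (Fin n)) (i s : Fin n) :
    Option (Fin n → Option (Fin n)) :=
  match occ s with
  | none => some (Function.update occ s (some i))
  | some j =>
      (firstFree (Function.update occ s (some i)) s).map fun k =>
        Function.update (Function.update occ s (some i)) k (some j)

/-- Run a parking process: cars `0, 1, …, n-1` enter in order, with car `i`
preferring spot `p i`. Returns the final occupancy, or `none` on failure. -/
def runProcess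
    (step : (Fin n → Option (Fin n)) → Fin n → Fin n → Option (Fin n → Option (Fin n)))
    (p : Fin n → Fin n) : Option (Fin n → Option (Fin n)) :=
  List.foldlM (fun occ i => step occ i (p i)) (fun _ => none) (List.finRange n)

def mvpRun (p : Fin n → Fin n) : Option (Fin n → Option (Fin n)) :=
  runProcess mvpStep p

def classicalRun (p : Fin n → Fin n) : Option (Fin n → Option (Fin n)) :=
  runProcess classicalStep p

/-- All cars park successfully under the MVP process. -/
def IsMVPParking (p : Fin n → Fin n) : Prop := (mvpRun p).isSome

/-- All cars park successfully under the classical process. -/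
def IsClassicalParking (p : Fin n → Fin n) : Prop := (classicalRun p).isSome

/-- `MVPOutcome p π` means that the MVP parking process for `p` succeeds, and
car `π i` finally occupies spot `i` for all `i`; that is, `O_MVP(p) = π`. -/
def MVPOutcome (p : Fin n → Fin n) (π : Equiv.Perm (Fin n)) : Prop :=
  ∃ occ, mvpRun p = some occ ∧ ∀ i, occ i = some (π i)

/-- `p` is a parking function: for every `k`, at least `k+1` cars prefer a spot
`≤ k` (the classical counting characterisation, 0-indexed). -/
def IsParkingFunction (p : Fin n → Fin n) : Prop :=
  ∀ k : Fin n, (k : ℕ) + 1 ≤ (univ.filter fun i => p i ≤ k).card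

/-- The fibre of the MVP outcome map over `π`: parking functions with MVP
outcome `π`. -/
def FibMVP (π : Equiv.Perm (Fin n)) : Set (Fin n → Fin n) :=
  {p | IsParkingFunction p ∧ MVPOutcome p π}

/-- The set of inversions of `π` (where `π i` is the car occupying spot `i`):
pairs `(j, i)` with `j < i` and `π j > π i`. These are the edges of the
inversion graph `G_π`. -/
def invFinset (π : Equiv.Perm (Fin n)) : Finset (Fin n × Fin n) :=
  univ.filter fun e => e.1 < e.2 ∧ π e.2 < π e.1

/-- The left-inversions of `π` at `i`. -/
def lInv (π : Equiv.Perm (Fin n)) (i : Fin n) : Finset (Fin n) :=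
  univ.filter fun j => j < i ∧ π i < π j

/-- A 1-subgraph of the inversion graph of `π`: a set of inversions with at
most one incident left-arc at each vertex. -/
def IsOneSubgraph (π : Equiv.Perm (Fin n)) (S : Finset (Fin n × Fin n)) : Prop :=
  S ⊆ invFinset π ∧ ∀ i j j' : Fin n, (j, i) ∈ S → (j', i) ∈ S → j = j'

/-- The map `Ψ_{Sub→PF}`: the parking preference `p` where `p (π i) = j` if
`(j, i) ∈ S` (for the unique such `j`), and `p (π i) = i` otherwise. -/
noncomputable def subToPF (π : Equiv.Perm (Fin n)) (S : Finset (Fin n × Fin n)) :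
    Fin n → Fin n := fun c =>
  if h : ∃ j, (j, π.symm c) ∈ S then h.choose else π.symm c

/-- The map `Ψ_{PF→Sub}`: the set of inversions `(j, i)` of `π` with
`p (π i) = j`. -/
def pfToSub (π : Equiv.Perm (Fin n)) (p : Fin n → Fin n) : Finset (Fin n × Fin n) :=
  (invFinset π).filter fun e => p (π e.2) = e.1

/-- A 1-subgraph `S` is valid if the MVP outcome of `Ψ_{Sub→PF}(S)` is `π`. -/
def IsValid (π : Equiv.Perm (Fin n)) (S : Finset (Fin n × Fin n)) : Prop :=
  MVPOutcome (subToPF π S) π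

/-- `π` contains the pattern `321`. -/
def Contains321 (π : Equiv.Perm (Fin n)) : Prop :=
  ∃ i j k : Fin n, i < j ∧ j < k ∧ π k < π j ∧ π j < π i

/-- `π` contains the pattern `3412`. -/
def Contains3412 (π : Equiv.Perm (Fin n)) : Prop :=
  ∃ i j k l : Fin n, i < j ∧ j < k ∧ k < l ∧ π k < π l ∧ π l < π i ∧ π i < π j

/-- `S` is `P⃗₂`-free: there is no triple `i < j < k` with `(i,j) ∈ S` and
`(j,k) ∈ S`. -/
def P2Free (S : Finset (Fin n × Fin n)) : Prop :=
  ¬∃ i j k : Fin n, i < j ∧ j < k ∧ (i, j) ∈ S ∧ (j, k) ∈ S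

/-- `S` is horizontally separated (HS): any two distinct edges `(j,i)` and
`(j',i')` of `S` satisfy `i < j'` or `i' < j`. -/
def IsHS (S : Finset (Fin n × Fin n)) : Prop :=
  ∀ e ∈ S, ∀ e' ∈ S, e ≠ e' → e.2 < e'.1 ∨ e'.2 < e.1

/-- Steps of a Motzkin path: up, horizontal, down. -/
inductive MStep : Type
  | U : MStep
  | H : MStep
  | D : MStep
  deriving DecidableEq

/-- The height change of a step. -/
def stepVal : MStep → ℤ
  | MStep.U => 1
  | MStep.H => 0
  | MStep.D => -1

/-- The number of cars preferring spot `j` in `p`. -/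
def prefCount (p : Fin n → Fin n) (j : Fin n) : ℕ :=
  (univ.filter fun i => p i = j).card

/-- The lattice path `Φ(p)`: step `j` is `U`, `H` or `D` according to whether
spot `j` is preferred by at least two, exactly one, or no cars. -/
def Phi (p : Fin n → Fin n) : Fin n → MStep := fun j =>
  if 2 ≤ prefCount p j then MStep.U
  else if prefCount p j = 1 then MStep.H
  else MStep.D

/-- An `n`-step lattice path is a Motzkin path: it ends at height `0` and no
prefix goes below height `0`. -/
def IsMotzkinPath (φ : Fin n → MStep) : Prop :=
  (∑ j : Fin n, stepVal (φ j)) = 0 ∧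
  ∀ k : Fin n, 0 ≤ ∑ j ∈ univ.filter (fun j : Fin n => j ≤ k), stepVal (φ j)

/-- The decreasing permutation `dec_n = n(n-1)⋯1`: spot `i` gets car `n-1-i`
(0-indexed). -/
def decPerm (n : ℕ) : Equiv.Perm (Fin n) :=
  ⟨Fin.rev, Fin.rev, Fin.rev_rev, Fin.rev_rev⟩

/-- A non-crossing matching arc diagram on `{0, …, n-1}`: arcs go left to
right, each vertex is incident to at most one arc, and no two arcs cross. -/
def IsNonCrossMatching (S : Finset (Fin n × Fin n)) : Prop :=
  (∀ e ∈ S, e.1 < e.2) ∧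
  (∀ e ∈ S, ∀ e' ∈ S, e ≠ e' →
    e.1 ≠ e'.1 ∧ e.1 ≠ e'.2 ∧ e.2 ≠ e'.1 ∧ e.2 ≠ e'.2) ∧
  ¬∃ i j k l : Fin n, i < j ∧ j < k ∧ k < l ∧ (i, k) ∈ S ∧ (j, l) ∈ S

/-- A stable configuration `c` (grain counts, each `< n`) on the complete graph
`K_n` is recurrent; by Dhar's burning criterion this amounts on `K_n` to the
existence of an ordering `v` of the vertices with `c (v k) ≥ n - (k+1)` for
every `k` (0-indexed). -/
def IsRecurrentK (c : Fin n → ℕ) : Prop :=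
  (∀ i, c i < n) ∧ ∃ v : Equiv.Perm (Fin n), ∀ k : Fin n, n ≤ c (v k) + (k : ℕ) + 1

theorem foldlM_iff {α β : Type*} (f : β → α → Option β) (l : List α) (a b : β) :
    List.foldlM f a l = some b ↔ ∃ o : ℕ → β, o 0 = a ∧ o l.length = b ∧
      ∀ t (h : t < l.length), f (o t) l[t] = some (o (t+1)) := by
  induction l generalizing a with
  | nil =>
    simp only [List.foldlM_nil, List.length_nil]
    constructor
    · intro h
      have h : a = b := by simpa using h
      exact ⟨fun _ => a, rfl, h, by simp⟩
    · rintro ⟨o, h0, h1, -⟩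
      rw [← h0, ← h1]; rfl
  | cons x l ih =>
    rw [List.foldlM_cons]
    constructor
    · intro h
      obtain ⟨a', h1, h2⟩ := Option.bind_eq_some_iff.1 h
      obtain ⟨o, h0, hl, hs⟩ := (ih a').1 h2
      refine ⟨fun t => Nat.casesOn t a o, rfl, hl, ?_⟩
      intro t ht
      cases t with
      | zero => simpa [h0] using h1
      | succ t => simpa using hs t (by simpa using ht)
    · rintro ⟨o, h0, hl, hs⟩
      refine Option.bind_eq_some_iff.2 ⟨o 1, ?_, ?_⟩
      · have := hs 0 (by simp)
        simpa [h0] using this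
      · refine (ih (o 1)).2 ⟨fun t => o (t+1), rfl, hl, ?_⟩
        intro t ht
        have := hs (t+1) (by simpa using ht)
        simpa using this

theorem firstFree_iff (occ : Fin n → Option (Fin n)) (s k : Fin n) :
    firstFree occ s = some k ↔ s ≤ k ∧ occ k = none ∧ ∀ x, s ≤ x → x < k → occ x ≠ none := by
  unfold firstFree
  rw [List.find?_eq_some_iff_getElem]
  simp only [Bool.and_eq_true, decide_eq_true_eq, Option.isNone_iff_eq_none, List.getElem_finRange,
    List.length_finRange]
  constructor
  · rintro ⟨⟨h1, h2⟩, i, hi, rfl, h3⟩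
    refine ⟨h1, h2, fun x hx hxk hn => ?_⟩
    have := h3 x.1 hxk
    simp at this
    rcases this with h4 | h4
    · omega
    · rw [hn] at h4
      simp at h4
  · rintro ⟨h1, h2, h3⟩
    refine ⟨⟨h1, h2⟩, k.1, k.2, rfl, fun j hj => ?_⟩
    have := h3 ⟨j, hj.trans k.2⟩
    by_cases hs : s ≤ ⟨j, hj.trans k.2⟩
    · have := this hs hj
      have h5 := Option.isSome_iff_ne_none.2 this
      simp [h5]
    · simp [hs]

theorem mvpStep_iff (o o' : Fin n → Option (Fin n)) (i s : Fin n) :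
    mvpStep o i s = some o' ↔
      (o s = none ∧ o' = Function.update o s (some i)) ∨
      ∃ j k, o s = some j ∧ s < k ∧ o k = none ∧ (∀ x, s < x → x < k → o x ≠ none) ∧
        o' = Function.update (Function.update o s (some i)) k (some j) := by
  unfold mvpStep
  cases h : o s with
  | none => simp [eq_comm]
  | some j =>
    simp only [Option.map_eq_some_iff, firstFree_iff]
    constructor
    · rintro ⟨k, ⟨h1, h2, h3⟩, rfl⟩
      right
      have hne : k ≠ s := by rintro rfl; simp at h2
      refine ⟨j, k, rfl, lt_of_le_of_ne h1 hne.symm, by simpa [hne] using h2, ?_, rfl⟩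
      intro x hx hk
      have := h3 x hx.le hk
      simpa [hx.ne'] using this
    · rintro (⟨h, -⟩ | ⟨j', k, h1, h2, h3, h4, rfl⟩)
      · cases h
      · cases h1
        refine ⟨k, ⟨h2.le, by simpa [h2.ne'] using h3, ?_⟩, rfl⟩
        intro x hx hk
        by_cases hxs : x = s
        · subst hxs; simp
        · have := h4 x (lt_of_le_of_ne hx (Ne.symm hxs)) hk
          simpa [hxs] using this

/-- A full run of the process with outcome `dec`. -/
def IsRun (p : Fin n → Fin n) (o : ℕ → Fin n → Option (Fin n)) : Prop :=
  (∀ x, o 0 x = none) ∧ (∀ x, o n x = some x.rev) ∧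
    ∀ t (h : t < n), mvpStep (o t) ⟨t, h⟩ (p ⟨t, h⟩) = some (o (t+1))

theorem outcome_iff (p : Fin n → Fin n) :
    MVPOutcome p (decPerm n) ↔ ∃ o, IsRun p o := by
  unfold MVPOutcome mvpRun runProcess IsRun
  simp only [foldlM_iff, List.length_finRange, List.getElem_finRange]
  constructor
  · rintro ⟨occ, ⟨o, h0, h1, h2⟩, h⟩
    exact ⟨o, fun x => by rw [h0], fun x => by rw [h1, h]; rfl, h2⟩
  · rintro ⟨o, h0, h1, h2⟩
    exact ⟨o n, ⟨o, funext h0, rfl, h2⟩, h1⟩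

def NCp (p : Fin n → Fin n) : Prop :=
  (∀ c, p c ≤ c.rev) ∧
  (∀ c c', p c < c.rev → p c' < c'.rev → c ≠ c' → p c ≠ p c' ∧ p c ≠ c'.rev) ∧
  (∀ c c', p c < p c' → p c' < c.rev → c.rev < c'.rev → False)

/-- Pointwise description of a step. -/
theorem IsRun.step {p : Fin n → Fin n} {o} (H : IsRun p o) (t : Fin n) :
    (o t (p t) = none ∧ o (t+1) (p t) = some t ∧ ∀ x, x ≠ p t → o (t+1) x = o t x) ∨
    ∃ j k, o t (p t) = some j ∧ p t < k ∧ o t k = none ∧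
      (∀ x, p t < x → x < k → o t x ≠ none) ∧ o (t+1) (p t) = some t ∧ o (t+1) k = some j ∧
      ∀ x, x ≠ p t → x ≠ k → o (t+1) x = o t x := by
  rcases (mvpStep_iff _ _ _ _).1 (H.2.2 t t.2) with ⟨h, h'⟩ | ⟨j, k, h1, h2, h3, h4, h'⟩
  · left
    refine ⟨h, by simp [h'], fun x hx => by simp [h', hx]⟩
  · right
    refine ⟨j, k, h1, h2, h3, h4, ?_, by simp [h'], fun x hx hk => by simp [h', hx, hk]⟩
    simp [h', h2.ne]

section run
variable {p : Fin n → Fin n} {o : ℕ → Fin n → Option (Fin n)}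

theorem IsRun.at (H : IsRun p o) (t : Fin n) : o (t+1) (p t) = some t := by
  rcases H.step t with h | ⟨j, k, h⟩
  · exact h.2.1
  · exact h.2.2.2.2.1

/-- If not preferred, an occupied spot is unchanged. -/
theorem IsRun.unch (H : IsRun p o) (t : Fin n) (x c : Fin n) (hx : x ≠ p t)
    (h : o t x = some c) : o (t+1) x = some c := by
  rcases H.step t with h' | ⟨j, k, h'⟩
  · rw [h'.2.2 x hx, h]
  · by_cases hk : x = k
    · subst hk; simp_all
    · rw [h'.2.2.2.2.2.2 x hx hk, h]

theorem IsRun.occ1 (H : IsRun p o) (t : Fin n) (x : Fin n)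
    (h : o t x ≠ none) : o (t+1) x ≠ none := by
  by_cases hx : x = p t
  · subst hx; rw [H.at t]; simp
  · obtain ⟨c, hc⟩ := Option.ne_none_iff_exists'.1 h
    rw [H.unch t x c hx hc]; simp

theorem IsRun.occ (H : IsRun p o) (t t' : ℕ) (htt : t ≤ t') (ht : t' ≤ n) (x : Fin n)
    (h : o t x ≠ none) : o t' x ≠ none := by
  induction t', htt using Nat.le_induction with
  | base => exact h
  | succ m hm ih => exact H.occ1 ⟨m, ht⟩ x (ih (by omega))

theorem IsRun.lt (H : IsRun p o) (t : ℕ) (ht : t ≤ n) (x c : Fin n)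
    (h : o t x = some c) : c.1 < t := by
  induction t generalizing x c with
  | zero => simp [H.1 x] at h
  | succ t ih =>
    have ih := ih (by omega)
    rcases H.step ⟨t, ht⟩ with h' | ⟨j, k, h'⟩
    all_goals dsimp only at h'
    · by_cases hx : x = p ⟨t, ht⟩
      · grind
      · have := ih x c; grind
    · by_cases hx : x = p ⟨t, ht⟩
      · grind
      · by_cases hk : x = k
        · have := ih (p ⟨t, ht⟩) j; grind
        · have := ih x c; grind

theorem IsRun.inj (H : IsRun p o) (t : ℕ) (ht : t ≤ n) (x y c : Fin n)
    (h : o t x = some c) (h2 : o t y = some c) : x = y := by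
  induction t generalizing x y c with
  | zero => simp [H.1 x] at h
  | succ t ih =>
    have ih := ih (by omega)
    have hlt := H.lt t (by omega)
    rcases H.step ⟨t, ht⟩ with h' | ⟨j, k, h'⟩
    all_goals dsimp only at h'
    · have h1 := hlt x c
      have h2 := hlt y c
      grind
    · have h1 := hlt x c
      have h2 := hlt y c
      have h3 := hlt (p ⟨t, ht⟩) c
      grind

theorem IsRun.mono (H : IsRun p o) (d t : ℕ) (ht : t + d = n) (x c : Fin n)
    (h : o t x = some c) : x ≤ c.rev := by
  induction d generalizing t x with
  | zero =>
    obtain rfl : t = n := by omega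
    have := H.2.1 x
    rw [h] at this
    simp at this
    rw [this, Fin.rev_rev]
  | succ d ih =>
    have ih := ih (t+1) (by omega)
    by_cases hx : x = p ⟨t, by omega⟩
    · subst hx
      rcases H.step ⟨t, by omega⟩ with h' | ⟨j, k, h'⟩
      · simp_all
      · have : j = c := by simp_all
        subst this
        exact h'.2.1.le.trans (ih k h'.2.2.2.2.2.1)
    · exact ih x (H.unch ⟨t, by omega⟩ x c hx h)

theorem IsRun.pref (H : IsRun p o) (c : Fin n) : p c ≤ c.rev :=
  H.mono (n - (c+1)) (c+1) (by omega) _ _ (H.at c)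

theorem IsRun.fin (H : IsRun p o) (d t : ℕ) (ht : t + d = n) (x c : Fin n)
    (h : o t x = some c) (hx : n ≤ x + t) : x = c.rev := by
  induction d generalizing t with
  | zero =>
    obtain rfl : t = n := by omega
    have := H.2.1 x
    rw [h] at this
    simp at this
    rw [this, Fin.rev_rev]
  | succ d ih =>
    refine ih (t+1) (by omega) (H.unch ⟨t, by omega⟩ x c ?_ h) (by omega)
    intro he
    have := H.pref ⟨t, by omega⟩
    rw [← he] at this
    rw [Fin.le_def, Fin.val_rev] at this
    dsimp only at this
    omega

theorem IsRun.occpref (H : IsRun p o) (t : ℕ) (x c : Fin n)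
    (h : o t x = some c) (hx : x + t < n) : p x.rev = x := by
  have hr := Fin.val_rev x
  have h1 : o x.rev x ≠ none := H.occ t x.rev (by omega) (by omega) x (by simp [h])
  obtain ⟨c', hc'⟩ := Option.ne_none_iff_exists'.1 h1
  by_contra hne
  have h2 := H.unch x.rev x c' (Ne.symm hne) hc'
  have h3 := H.fin (n - (x.rev+1)) (x.rev + 1) (by omega) x c' h2 (by omega)
  have h4 := H.lt _ (by omega) _ _ hc'
  rw [h3, Fin.rev_rev] at h4
  omega

theorem IsRun.free (H : IsRun p o) (t : ℕ) (ht : t ≤ n) (s d : Fin n)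
    (h : o t s = some d) (hs : s < d.rev) : o t d.rev = none := by
  by_contra hne
  obtain ⟨c, hc⟩ := Option.ne_none_iff_exists'.1 hne
  have hd := H.lt t ht _ _ h
  have hr := Fin.val_rev d
  have := H.fin (n - t) t (by omega) _ _ hc (by omega)
  have : c = d := by rw [Fin.rev_inj] at this; exact this.symm
  subst this
  have := H.inj t ht _ _ _ h hc
  omega

theorem IsRun.bad (H : IsRun p o) (d t : ℕ) (ht : t + d = n) (s k a b : Fin n)
    (hsk : s < k) (hk : k + t < n) (hs : o t s = some a) (hkb : o t k = some b)
    (hab : b < a) : False := by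
  induction d generalizing t s k a b with
  | zero => omega
  | succ d ih =>
    have ih := ih (t+1) (by omega)
    have htn : t < n := by omega
    have ha := H.lt t (by omega) _ _ hs
    have hra := Fin.val_rev a
    have hrb := Fin.val_rev b
    have hfree := H.free t (by omega) s a hs (by rw [Fin.lt_def]; omega)
    -- if k gets bumped
    by_cases hpk : p ⟨t, htn⟩ = k
    · rcases H.step ⟨t, htn⟩ with h' | ⟨j, k2, h1, h2, h3, h4, h5, h6, h7⟩
      · simp_all
      · dsimp only at h1 h3 h4 h5 h6 h7
        rw [hpk] at h1 h2 h4 h5 h7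
        obtain rfl : b = j := by rw [hkb] at h1; simpa using h1
        by_cases hk2 : k2 + (t+1) < n
        · refine ih s k2 a b (hsk.trans h2) hk2 ?_ h6 hab
          rw [h7 s hsk.ne (hsk.trans h2).ne, hs]
        · have := H.fin d (t+1) (by omega) _ _ h6 (by omega)
          subst this
          exact h4 a.rev (by rw [Fin.lt_def]; omega) (by rw [Fin.lt_def]; omega) hfree
    · have hk' : k + (t+1) < n := by
        by_contra hcon
        have := H.occpref t k b hkb hk
        apply hpk
        have hr := Fin.val_rev k
        have : k.rev = ⟨t, htn⟩ := Fin.ext (by simp only; omega)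
        rw [← this]; assumption
      have hkb' := H.unch ⟨t, htn⟩ k b (Ne.symm hpk) hkb
      by_cases hps : p ⟨t, htn⟩ = s
      · have := H.at ⟨t, htn⟩
        rw [hps] at this
        exact ih s k ⟨t, htn⟩ b hsk hk' this hkb' (by rw [Fin.lt_def]; simp only; omega)
      · exact ih s k a b hsk hk' (H.unch ⟨t, htn⟩ s a (Ne.symm hps) hs) hkb' hab

theorem IsRun.bump (H : IsRun p o) (t j : Fin n) (h : o t (p t) = some j) : p t = t.rev := by
  by_contra hne
  have hle := H.pref t
  have hr := Fin.val_rev t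
  have hj := Fin.val_rev j
  have hlt : p t < t.rev := lt_of_le_of_ne hle hne
  have hjt := H.lt t (by omega) _ _ h
  rcases H.step t with h' | ⟨j', k, h1, h2, h3, h4, h5, h6, h7⟩
  · simp_all
  · obtain rfl : j = j' := by rw [h] at h1; simpa using h1
    have hf := H.free (t+1) (by omega) _ _ h5 hlt
    by_cases hk : k + (t.1+1) < n
    · exact H.bad (n - (t+1)) (t+1) (by omega) (p t) k t j h2 hk h5 h6 hjt
    · have hkj := H.fin (n - (t+1)) (t+1) (by omega) _ _ h6 (by omega)
      subst hkj
      have h8 := h4 t.rev hlt (by rw [Fin.lt_def]; omega)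
      exact H.occ1 t _ h8 hf

theorem IsRun.stay (H : IsRun p o) (c : Fin n) (t : ℕ) (hc : c.1 + 1 ≤ t) (ht : p c + t < n) :
    o t (p c) = some c := by
  induction t, hc using Nat.le_induction with
  | base => exact H.at c
  | succ m hm ih =>
    have ih := ih (by omega)
    refine H.unch ⟨m, by omega⟩ _ _ ?_ ih
    intro he
    have := H.bump ⟨m, by omega⟩ c (by rw [← he]; exact ih)
    have hr := Fin.val_rev (⟨m, by omega⟩ : Fin n)
    rw [← this, ← he] at hr
    dsimp only at hr
    omega

theorem IsRun.nc (H : IsRun p o) : NCp p := by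
  refine ⟨H.pref, ?_, ?_⟩
  · have key : ∀ c c', p c < c.rev → p c' < c'.rev → c < c' → p c ≠ p c' ∧ p c ≠ c'.rev := by
      intro c c' h1 h2 h3
      have hr := Fin.val_rev c
      have hr' := Fin.val_rev c'
      constructor
      · intro he
        have := H.stay c c' (by omega) (by omega)
        rw [he] at this
        have := H.bump c' c this
        omega
      · intro he
        have := H.stay c c' (by omega) (by omega)
        rw [he] at this
        have := H.occpref c' _ _ this (by omega)
        rw [Fin.rev_rev] at this
        omega
    intro c c' h1 h2 h3
    rcases lt_or_gt_of_ne h3 with h | h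
    · exact key c c' h1 h2 h
    · have := key c' c h2 h1 h
      have hr := Fin.val_rev c
      have hr' := Fin.val_rev c'
      exact ⟨this.1.symm, by omega⟩
  · intro c c' h1 h2 h3
    have hr := Fin.val_rev c
    have hr' := Fin.val_rev c'
    have e1 := H.stay c (c+1) (by omega) (by omega)
    have e2 := H.stay c' (c+1) (by omega) (by omega)
    exact H.bad (n - (c+1)) (c+1) (by omega) _ _ _ _ h1 (by omega) e1 e2 (by omega)

/-- The relation describing the state at time `t`. -/
def R (p : Fin n → Fin n) (t : ℕ) (x c : Fin n) : Prop :=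
  c.1 < t ∧ ((x = p c ∧ p c + t < n) ∨ (x = c.rev ∧ n ≤ p c + t))

theorem NCp.uniq (h : NCp p) (t : ℕ) (x c c' : Fin n) (h1 : R p t x c) (h2 : R p t x c') :
    c = c' := by
  obtain ⟨a1, b1⟩ := h1
  obtain ⟨a2, b2⟩ := h2
  have hr := Fin.val_rev c
  have hr' := Fin.val_rev c'
  by_contra hne
  rcases b1 with ⟨rfl, b1⟩ | ⟨rfl, b1⟩ <;> rcases b2 with ⟨b, b2⟩ | ⟨b, b2⟩
  · exact (h.2.1 c c' (by omega) (by omega) hne).1 b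
  · omega
  · omega
  · exact hne (Fin.rev_inj.1 b)

open Classical in
noncomputable def st (p : Fin n → Fin n) (t : ℕ) (x : Fin n) : Option (Fin n) :=
  if h : ∃ c, R p t x c then some h.choose else none

theorem NCp.st_iff (h : NCp p) (t : ℕ) (x c : Fin n) : st p t x = some c ↔ R p t x c := by
  unfold st
  split_ifs with hc
  · rw [Option.some_inj]
    constructor
    · rintro rfl; exact hc.choose_spec
    · intro h'; exact h.uniq t x _ _ hc.choose_spec h'
  · simp only [reduceCtorEq, false_iff]
    exact fun h' => hc ⟨c, h'⟩

theorem NCp.st_none (h : NCp p) (t : ℕ) (x : Fin n) : st p t x = none ↔ ∀ c, ¬ R p t x c := by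
  simp only [← h.st_iff, Option.eq_none_iff_forall_ne_some, ne_eq]

theorem NCp.run (h : NCp p) : IsRun p (st p) := by
  refine ⟨fun x => (h.st_none 0 x).2 (fun c hc => by simp [R] at hc), fun x => ?_, ?_⟩
  · rw [h.st_iff]
    exact ⟨by omega, Or.inr ⟨by simp, by omega⟩⟩
  · intro t htn
    have htr := Fin.val_rev (⟨t, htn⟩ : Fin n)
    have hle := h.1 ⟨t, htn⟩
    rw [mvpStep_iff]
    set T : Fin n := ⟨t, htn⟩ with hT
    have hTt : T.1 = t := rfl
    cases hs : st p t (p T) with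
    | none =>
      left
      refine ⟨rfl, ?_⟩
      rw [h.st_none] at hs
      funext x
      apply Option.ext
      intro c
      rw [h.st_iff]
      have hcr := Fin.val_rev c
      have hcle := h.1 c
      by_cases hx : x = p T
      · subst hx
        rw [Function.update_self, Option.some_inj]
        constructor
        · intro hc
          by_contra hne
          apply hs c
          unfold R at hc ⊢
          have hct : c.1 ≠ t := fun hh => hne (Fin.ext hh.symm)
          refine ⟨by omega, ?_⟩
          rcases hc.2 with ⟨h1, h2⟩ | ⟨h1, h2⟩
          · exact Or.inl ⟨h1, by omega⟩
          · have : c.1 < t := by omega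
            omega
        · rintro rfl
          refine ⟨by omega, ?_⟩
          by_cases hp : p T + (t+1) < n
          · exact Or.inl ⟨rfl, hp⟩
          · exact Or.inr ⟨by omega, by omega⟩
      · rw [Function.update_of_ne hx, h.st_iff]
        by_cases hcT : c = T
        · subst hcT
          constructor
          · rintro ⟨h1, ⟨h2, h3⟩ | ⟨h2, h3⟩⟩
            · exact absurd h2 hx
            · exfalso; apply hx; omega
          · intro hh; have := hh.1; omega
        · have hct : c.1 ≠ t := fun hh => hcT (Fin.ext hh)
          -- p c + t + 1 = n would make spot `rev t` occupied
          have hkey : c.1 < t → p c + t + 1 ≠ n := by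
            intro hc he
            have hpc : p c = T.rev := by omega
            by_cases hpT : p T = T.rev
            · exact hs c ⟨hc, Or.inl ⟨by omega, by omega⟩⟩
            · exact (h.2.1 c T (by omega) (by omega) hcT).2 hpc
          unfold R
          constructor
          · rintro ⟨h1, h2⟩
            have := hkey (by omega)
            refine ⟨by omega, ?_⟩
            rcases h2 with ⟨h2, h3⟩ | ⟨h2, h3⟩
            · exact Or.inl ⟨h2, by omega⟩
            · exact Or.inr ⟨h2, by omega⟩
          · rintro ⟨h1, h2⟩
            have := hkey (by omega)
            refine ⟨by omega, ?_⟩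
            rcases h2 with ⟨h2, h3⟩ | ⟨h2, h3⟩
            · exact Or.inl ⟨h2, by omega⟩
            · exact Or.inr ⟨h2, by omega⟩
    | some j =>
      right
      rw [h.st_iff] at hs
      obtain ⟨hjt, hj⟩ := hs
      have hjr := Fin.val_rev j
      have hjT : j ≠ T := by rintro rfl; omega
      have hj : p T = p j ∧ p j + t < n := by
        rcases hj with hj | ⟨hj, h2⟩
        · exact hj
        · omega
      have hpT : p T = T.rev := by
        by_contra hne
        exact (h.2.1 j T (by omega) (by omega) hjT).1 hj.1.symm
      refine ⟨j, j.rev, rfl, by omega, ?_, ?_, ?_⟩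
      · rw [h.st_none]
        rintro c ⟨h1, ⟨h2, h3⟩ | ⟨h2, h3⟩⟩
        · omega
        · have := Fin.rev_inj.1 h2
          subst this
          omega
      · intro x h1 h2
        have hxr := Fin.val_rev x
        have : st p t x = some x.rev := by
          rw [h.st_iff]
          refine ⟨by omega, Or.inr ⟨by simp, ?_⟩⟩
          by_contra hcon
          have hle := h.1 x.rev
          rw [Fin.rev_rev] at hle
          rcases lt_or_eq_of_le (show p x.rev ≤ p j by omega) with h3 | h3
          · exact h.2.2 x.rev j h3 (by rw [Fin.rev_rev]; omega) (by rw [Fin.rev_rev]; omega)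
          · refine (h.2.1 x.rev j (by rw [Fin.rev_rev]; omega) (by omega) ?_).1 h3
            rintro rfl
            rw [Fin.rev_rev] at h2
            omega
        rw [this]; simp
      · funext x
        apply Option.ext
        intro c
        rw [h.st_iff]
        have hcr := Fin.val_rev c
        have hcle := h.1 c
        have hRT : R p (t+1) T.rev T := ⟨by omega, Or.inr ⟨rfl, by omega⟩⟩
        have hRj : R p (t+1) j.rev j := ⟨by omega, Or.inr ⟨rfl, by omega⟩⟩
        by_cases hx : x = j.rev
        · subst hx
          rw [Function.update_self, Option.some_inj]
          constructor
          · intro hc; exact h.uniq _ _ _ _ hRj hc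
          · rintro rfl; exact hRj
        · rw [Function.update_of_ne hx]
          by_cases hx2 : x = p T
          · subst hx2
            rw [Function.update_self, Option.some_inj, hpT]
            constructor
            · intro hc; exact h.uniq _ _ _ _ hRT hc
            · rintro rfl; exact hRT
          · rw [Function.update_of_ne hx2, h.st_iff]
            unfold R
            by_cases hcT : c = T
            · subst hcT
              constructor
              · rintro ⟨h1, ⟨h2, h3⟩ | ⟨h2, h3⟩⟩ <;> omega
              · intro hh; have := hh.1; omega
            · have hct : c.1 ≠ t := fun hh => hcT (Fin.ext hh)
              by_cases hcj : c = j
              · subst hcj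
                constructor
                · rintro ⟨h1, ⟨h2, h3⟩ | ⟨h2, h3⟩⟩ <;> omega
                · rintro ⟨h1, ⟨h2, h3⟩ | ⟨h2, h3⟩⟩ <;> omega
              · have hkey : c.1 < t → p c + t + 1 ≠ n := by
                  intro hc he
                  exact (h.2.1 c j (by omega) (by omega) hcj).1 (by omega)
                constructor
                · rintro ⟨h1, h2⟩
                  have := hkey (by omega)
                  refine ⟨by omega, ?_⟩
                  rcases h2 with ⟨h2, h3⟩ | ⟨h2, h3⟩
                  · exact Or.inl ⟨h2, by omega⟩
                  · exact Or.inr ⟨h2, by omega⟩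
                · rintro ⟨h1, h2⟩
                  have := hkey (by omega)
                  refine ⟨by omega, ?_⟩
                  rcases h2 with ⟨h2, h3⟩ | ⟨h2, h3⟩
                  · exact Or.inl ⟨h2, by omega⟩
                  · exact Or.inr ⟨h2, by omega⟩

theorem outcome_nc (p : Fin n → Fin n) : MVPOutcome p (decPerm n) ↔ NCp p := by
  rw [outcome_iff]
  exact ⟨fun ⟨_, H⟩ => H.nc, fun h => ⟨_, h.run⟩⟩

theorem oneSub_iff (S : Finset (Fin n × Fin n)) : IsOneSubgraph (decPerm n) S ↔
    (∀ j i, (j, i) ∈ S → j < i) ∧ ∀ i j j' : Fin n, (j, i) ∈ S → (j', i) ∈ S → j = j' := by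
  unfold IsOneSubgraph
  refine and_congr ?_ Iff.rfl
  constructor
  · intro h j i hji
    have := h hji
    simp only [invFinset, mem_filter] at this
    exact this.2.1
  · rintro h ⟨j, i⟩ hji
    simp only [invFinset, mem_filter, mem_univ, true_and]
    have := h j i hji
    exact ⟨this, Fin.rev_lt_rev.2 this⟩

theorem mem_iff (S : Finset (Fin n × Fin n)) (hS : IsOneSubgraph (decPerm n) S) (j i : Fin n) :
    (j, i) ∈ S ↔ subToPF (decPerm n) S i.rev = j ∧ j < i := by
  rw [oneSub_iff] at hS
  have hsymm : (decPerm n).symm i.rev = i := Fin.rev_rev i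
  unfold subToPF
  rw [hsymm]
  split_ifs with h
  · constructor
    · intro hji
      exact ⟨hS.2 i _ _ h.choose_spec hji, hS.1 _ _ hji⟩
    · rintro ⟨rfl, -⟩
      exact h.choose_spec
  · constructor
    · intro hji; exact absurd ⟨j, hji⟩ h
    · rintro ⟨rfl, h'⟩; omega

theorem sub_le (S : Finset (Fin n × Fin n)) (hS : IsOneSubgraph (decPerm n) S) (i : Fin n) :
    subToPF (decPerm n) S i.rev ≤ i := by
  rw [oneSub_iff] at hS
  have hsymm : (decPerm n).symm i.rev = i := Fin.rev_rev i
  unfold subToPF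
  rw [hsymm]
  split_ifs with h
  · exact (hS.1 _ _ h.choose_spec).le
  · exact le_rfl

theorem nc_iff (S : Finset (Fin n × Fin n)) (hS : IsOneSubgraph (decPerm n) S) :
    NCp (subToPF (decPerm n) S) ↔ IsNonCrossMatching S := by
  have hm := mem_iff S hS
  have hle := sub_le S hS
  set p := subToPF (decPerm n) S
  constructor
  · rintro ⟨h1, h2, h3⟩
    refine ⟨fun e he => ((hm e.1 e.2).1 he).2, ?_, ?_⟩
    · rintro ⟨j, i⟩ he ⟨j', i'⟩ he' hne
      obtain ⟨rfl, a⟩ := (hm _ _).1 he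
      obtain ⟨rfl, a'⟩ := (hm _ _).1 he'
      have hii : i ≠ i' := by rintro rfl; exact hne rfl
      have b := h2 i.rev i'.rev (by simpa using a) (by simpa using a') (by simpa using hii)
      have b' := h2 i'.rev i.rev (by simpa using a') (by simpa using a) (by simpa using hii.symm)
      simp only [Fin.rev_rev] at b b'
      exact ⟨b.1, b.2, b'.2.symm, hii⟩
    · rintro ⟨i, j, k, l, h4, h5, h6, h7, h8⟩
      obtain ⟨rfl, a⟩ := (hm _ _).1 h7
      obtain ⟨rfl, a'⟩ := (hm _ _).1 h8
      exact h3 k.rev l.rev h4 (by simpa using h5) (by simpa using h6)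
  · rintro ⟨h1, h2, h3⟩
    have hin : ∀ c, p c < c.rev → (p c, c.rev) ∈ S := fun c hc =>
      (hm _ _).2 ⟨by rw [Fin.rev_rev], hc⟩
    refine ⟨fun c => by have := hle c.rev; rwa [Fin.rev_rev] at this, ?_, ?_⟩
    · intro c c' a a' hne
      have := h2 _ (hin c a) _ (hin c' a') (fun hh => hne (Fin.rev_inj.1 (congrArg Prod.snd hh)))
      exact ⟨this.1, this.2.1⟩
    · intro c c' a b d
      exact h3 ⟨p c, p c', c.rev, c'.rev, a, b, d, hin c (a.trans b), hin c' (b.trans d)⟩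

theorem nc_oneSub (S : Finset (Fin n × Fin n)) (hS : IsNonCrossMatching S) :
    IsOneSubgraph (decPerm n) S := by
  rw [oneSub_iff]
  refine ⟨fun j i h => hS.1 _ h, fun i j j' h h' => ?_⟩
  by_contra hne
  exact (hS.2.1 _ h _ h' (fun hh => hne (congrArg Prod.fst hh))).2.2.2 rfl

theorem pf_of_le (p : Fin n → Fin n) (h : ∀ c, p c ≤ c.rev) : IsParkingFunction p := by
  intro k
  have : ((Finset.Iic k).image Fin.rev) ⊆ univ.filter fun i => p i ≤ k := by
    intro c hc
    simp only [mem_image, mem_Iic] at hc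
    obtain ⟨x, hx, rfl⟩ := hc
    have := h x.rev
    rw [Fin.rev_rev] at this
    simpa using this.trans hx
  have h2 := card_le_card this
  rw [card_image_of_injective _ Fin.rev_injective, Fin.card_Iic] at h2
  exact h2

end run

/-- for the decreasing permutation `dec_n`, a 1-subgraph is valid
iff it is a non-crossing matching; consequently `Ψ_{Sub→PF}` restricts to a
bijection from `NonCross_n` onto `Fib_n(dec_n)`. -/
theorem statement11 (n : ℕ) :
    (∀ S : Finset (Fin n × Fin n), IsOneSubgraph (decPerm n) S →
      (IsValid (decPerm n) S ↔ IsNonCrossMatching S)) ∧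
    Set.BijOn (subToPF (decPerm n))
      {S : Finset (Fin n × Fin n) | IsNonCrossMatching S}
      (FibMVP (decPerm n)) := by
  have part1 : ∀ S : Finset (Fin n × Fin n), IsOneSubgraph (decPerm n) S →
      (IsValid (decPerm n) S ↔ IsNonCrossMatching S) := by
    intro S hS
    unfold IsValid
    rw [outcome_nc, nc_iff S hS]
  refine ⟨part1, ?_, ?_, ?_⟩
  · intro S hS
    have h1 := nc_oneSub S hS
    have h2 := (nc_iff S h1).2 hS
    exact ⟨pf_of_le _ h2.1, (outcome_nc _).2 h2⟩
  · intro S hS S' hS' he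
    ext ⟨j, i⟩
    rw [mem_iff S (nc_oneSub S hS), mem_iff S' (nc_oneSub S' hS'), he]
  · rintro p ⟨-, hp⟩
    have hnc := (outcome_nc p).1 hp
    let S : Finset (Fin n × Fin n) := univ.filter fun e => p e.2.rev = e.1 ∧ e.1 < e.2
    have hS : IsOneSubgraph (decPerm n) S := by
      rw [oneSub_iff]
      refine ⟨fun j i h => ?_, fun i j j' h h' => ?_⟩
      · simp only [S, mem_filter] at h; exact h.2.2
      · simp only [S, mem_filter] at h h'; exact h.2.1.symm.trans h'.2.1
    have hSp : subToPF (decPerm n) S = p := by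
      funext c
      have hm := mem_iff S hS
      have hle := sub_le S hS c.rev
      have hple := hnc.1 c
      rw [Fin.rev_rev] at hle
      rcases lt_or_eq_of_le hple with hlt | heq
      · have := (hm (p c) c.rev).1 (by simp [S, hlt])
        rw [Fin.rev_rev] at this
        exact this.1
      · rcases lt_or_eq_of_le hle with hlt | heq'
        · have := (hm (subToPF (decPerm n) S c) c.rev).2 ⟨by rw [Fin.rev_rev], hlt⟩
          simp only [S, mem_filter, Fin.rev_rev] at this
          exact this.2.1.symm
        · rw [heq, heq']
    refine ⟨S, ?_, hSp⟩
    refine (nc_iff S hS).1 ?_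
    rw [hSp]; exact hnc

end MVPPaper
end

section
/- Fix m ≥ 1 and j with 2 ≤ j ≤ m, and consider the complete bipartite permutation τ_{m,2} ∈ S_{m+2}. The 1-subgraph S₁ of its inversion graph consisting of exactly the two (non-crossing) edges (1, m+1) and (j, m+2) is valid if and only if m + j is even. -/
/- Common definitions: the classical and MVP parking processes, parking
functions, inversion graphs and 1-subgraphs, Motzkin paths, and sandpile
configurations on complete graphs. Spots, cars and vertices are 0-indexed
(element `i : Fin n` corresponds to the 1-indexed `i+1` of the paper). -/

namespace MVPPaper

open Finset

variable {n : ℕ}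

theorem foldlM_aux {α : Type} {n : ℕ} (f : α → Fin n → Option α) (F : ℕ → α)
    (h : ∀ i : Fin n, f (F i) i = some (F (i + 1))) :
    List.foldlM f (F 0) (List.finRange n) = some (F n) := by
  have key : ∀ k, k ≤ n → List.foldlM f (F 0) ((List.finRange n).take k) = some (F k) := by
    intro k
    induction k with
    | zero => intro _; simp
    | succ k ih =>
      intro hk
      have hl : k < (List.finRange n).length := by simp; omega
      rw [List.take_succ_eq_append_getElem hl, List.foldlM_append, ih (by omega)]
      have := h ⟨k, by omega⟩
      simp at this ⊢
      exact this
  have := key n le_rfl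
  rwa [List.take_of_length_le (by simp)] at this

theorem firstFree_eq {n : ℕ} (occ : Fin n → Option (Fin n)) (s k : Fin n) (hsk : s ≤ k)
    (hk : occ k = none) (hl : ∀ l, s ≤ l → l < k → occ l ≠ none) :
    firstFree occ s = some k := by
  unfold firstFree
  rw [List.find?_eq_some_iff_getElem]
  refine ⟨by simp [hsk, hk], k, by simp, by simp, ?_⟩
  intro l hlk
  have := hl ⟨l, by omega⟩
  simp only [List.getElem_finRange, Bool.not_eq_true', Bool.and_eq_false_iff,
    decide_eq_false_iff_not, Option.isNone_eq_false_iff, Fin.cast_mk]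
  by_cases hs : s ≤ ⟨l, by omega⟩
  · right
    exact Option.isSome_iff_ne_none.mpr (this hs hlk)
  · left; exact hs

theorem mvpStep_bump {n : ℕ} (occ : Fin n → Option (Fin n)) (i s k c : Fin n)
    (hs : occ s = some c) (hsk : s < k)
    (hk : occ k = none) (hl : ∀ l, s < l → l < k → occ l ≠ none) :
    mvpStep occ i s =
      some (Function.update (Function.update occ s (some i)) k (some c)) := by
  unfold mvpStep
  rw [hs]
  simp only
  rw [firstFree_eq _ s k hsk.le]
  · rfl
  · rw [Function.update_of_ne hsk.ne']; exact hk
  · intro l h1 h2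
    rcases h1.eq_or_lt with h | h
    · subst h; simp
    · rw [Function.update_of_ne h.ne']; exact hl l h h2

def zpos (a t : ℕ) : ℕ := if t < a then t else if (t - a) % 2 = 0 then t + 1 else t
def opos (a t : ℕ) : ℕ := if t < a then a else if (t - a) % 2 = 0 then t else t + 1

def St (m a t : ℕ) (k : Fin (m + 2)) : Option (Fin (m + 2)) :=
  if h : (k : ℕ) + 2 < t ∧ (k : ℕ) < m then some ⟨k + 2, by omega⟩
  else if 1 ≤ t ∧ (k : ℕ) = zpos a (t - 2) then some ⟨0, by omega⟩
  else if 2 ≤ t ∧ (k : ℕ) = opos a (t - 2) then some ⟨1, by omega⟩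
  else none

theorem run_eq (m a : ℕ) (ha : 1 ≤ a) (ham : a < m) (p : Fin (m + 2) → Fin (m + 2))
    (hp : ∀ c : Fin (m + 2), (p c : ℕ) = if (c : ℕ) = 0 then 0 else if (c : ℕ) = 1 then a
      else (c : ℕ) - 2) : mvpRun p = some (St m a (m + 2)) := by
  have h0 : (fun _ => none : Fin (m + 2) → Option (Fin (m + 2))) = St m a 0 := by
    funext k; simp [St]
  unfold mvpRun runProcess
  rw [h0]
  apply foldlM_aux (fun occ i => mvpStep occ i (p i)) (St m a)
  intro i
  have hpi := hp i
  obtain ⟨i, hi⟩ := i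
  generalize hs : p ⟨i, hi⟩ = s at *
  obtain ⟨s, hsn⟩ := s
  simp only at hpi ⊢
  rcases Nat.lt_or_ge i 2 with hi2 | hi2
  · have hz : zpos a 0 = 0 := by simp [zpos]; omega
    have ho : opos a 0 = a := by simp [opos]; omega
    have e0 : i - 2 = 0 := by omega
    have e0' : i + 1 - 2 = 0 := by omega
    have hsi : i = 0 ∧ s = 0 ∨ i = 1 ∧ s = a := by split_ifs at hpi <;> omega
    clear hpi hs hp h0
    have e : St m a i ⟨s, hsn⟩ = none := by
      simp only [St, e0, hz, ho]
      rw [dif_neg (by omega), if_neg (by omega), if_neg (by omega)]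
    unfold mvpStep
    rw [e]
    simp only [Option.some.injEq]
    funext k
    obtain ⟨k, hk⟩ := k
    simp only [Function.update_apply, St, e0, e0', hz, ho, Fin.mk.injEq]
    split_ifs <;> first | rfl | (exfalso; omega) | (simp only [Option.some.injEq, Fin.mk.injEq]; omega)
  · obtain ⟨t, rfl⟩ : ∃ t, i = t + 2 := ⟨i - 2, by omega⟩
    have hst : s = t := by
      rw [if_neg (by omega), if_neg (by omega)] at hpi; omega
    subst hst
    obtain ⟨k, hkm, hsk, hdis, hkz, hko, hl⟩ : ∃ k, k < m + 2 ∧ s < k ∧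
        ((zpos a s = s ∧ zpos a (s + 1) = k ∧ opos a (s + 1) = opos a s ∧ s < opos a s) ∨
         (opos a s = s ∧ opos a (s + 1) = k ∧ zpos a (s + 1) = zpos a s ∧ s < zpos a s)) ∧
        k ≠ zpos a s ∧ k ≠ opos a s ∧
        ∀ l, s < l → l < k → l = zpos a s ∨ l = opos a s := by
      refine ⟨if s + 1 < a then s + 1 else s + 2, ?_, ?_, ?_, ?_, ?_, ?_⟩
      · split_ifs <;> omega
      · split_ifs <;> omega
      · unfold zpos opos; split_ifs <;> omega
      · unfold zpos; split_ifs <;> omega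
      · unfold opos; split_ifs <;> omega
      · intro l h1 h2; unfold zpos opos; split_ifs at * <;> omega
    have e1 : s + 2 - 2 = s := by omega
    have e2 : s + 2 + 1 - 2 = s + 1 := by omega
    clear hpi hs hp h0
    have hS : ∃ c : Fin (m + 2), St m a (s + 2) ⟨s, hsn⟩ = some c ∧
        ((c : ℕ) = 0 ∧ zpos a s = s ∨ (c : ℕ) = 1 ∧ opos a s = s ∧ s < zpos a s) := by
      simp only [St, e1]
      rcases hdis with h | h
      · refine ⟨⟨0, by omega⟩, ?_, Or.inl ⟨rfl, h.1⟩⟩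
        rw [dif_neg (by omega), if_pos (by omega)]
      · refine ⟨⟨1, by omega⟩, ?_, Or.inr ⟨rfl, h.1, h.2.2.2⟩⟩
        rw [dif_neg (by omega), if_neg (by omega), if_pos (by omega)]
    obtain ⟨⟨c, hc⟩, hS, hcc⟩ := hS
    rw [mvpStep_bump (St m a (s + 2)) ⟨s + 2, hi⟩ ⟨s, hsn⟩ ⟨k, hkm⟩ ⟨c, hc⟩ hS]
    · simp only [Option.some.injEq]
      funext x
      obtain ⟨x, hx⟩ := x
      simp only [Function.update_apply, St, Fin.mk.injEq, e1, e2]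
      simp only at hcc
      generalize zpos a s = z at *
      generalize opos a s = o at *
      generalize zpos a (s + 1) = z' at *
      generalize opos a (s + 1) = o' at *
      clear hS hl
      split_ifs <;> first | rfl | (exfalso; omega) | (simp only [Option.some.injEq, Fin.mk.injEq]; omega)
    · exact hsk
    · simp only [St, e1]
      rw [dif_neg (by omega), if_neg (by omega), if_neg (by omega)]
    · rintro ⟨l, hlm⟩ h1 h2
      have := hl l h1 h2
      simp only [St, e1]
      split_ifs <;> first | (simp; done) | (exfalso; omega)

/-- for `2 ≤ j ≤ m` (1-indexed), the 1-subgraph of the inversion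
graph of `τ_{m,2}` with the two non-crossing edges `(1, m+1)` and `(j, m+2)`
(0-indexed: `(0, m)` and `(j-1, m+1)`) is valid iff `m + j` is even. -/
theorem statement14 (m j : ℕ) (hm : 1 ≤ m) (hj1 : 2 ≤ j) (hj2 : j ≤ m)
    (π : Equiv.Perm (Fin (m + 2)))
    (hπ : ∀ i : Fin (m + 2),
      (π i : ℕ) = if (i : ℕ) < m then (i : ℕ) + 2 else (i : ℕ) - m) :
    (IsValid π
      ({((⟨0, by omega⟩ : Fin (m + 2)), (⟨m, by omega⟩ : Fin (m + 2))),
        ((⟨j - 1, by omega⟩ : Fin (m + 2)), (⟨m + 1, by omega⟩ : Fin (m + 2)))} :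
        Finset (Fin (m + 2) × Fin (m + 2))) ↔ Even (m + j)) := by
  have hs : ∀ c : Fin (m + 2), ((π.symm c : Fin (m + 2)) : ℕ) =
      if (c : ℕ) < 2 then m + (c : ℕ) else (c : ℕ) - 2 := by
    intro c
    have h := hπ (π.symm c)
    rw [Equiv.apply_symm_apply] at h
    have h1 := (π.symm c).isLt
    have h2 := c.isLt
    split_ifs at h ⊢ <;> omega
  unfold IsValid MVPOutcome
  rw [run_eq m (j - 1) (by omega) (by omega)]
  · constructor
    · rintro ⟨occ, h, hocc⟩
      rw [Option.some.injEq] at h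
      subst h
      have h := hocc ⟨m, by omega⟩
      have hv := hπ ⟨m, by omega⟩
      simp only [lt_irrefl, if_false, Nat.sub_self] at hv
      have hv' : π ⟨m, by omega⟩ = ⟨0, by omega⟩ := Fin.ext hv
      rw [hv'] at h
      rw [Nat.even_iff]
      simp only [St, zpos, opos, Nat.add_sub_cancel] at h
      split_ifs at h <;> first | omega | (simp at h; done)
    · intro h
      rw [Nat.even_iff] at h
      refine ⟨_, rfl, ?_⟩
      intro i
      have hv := hπ i
      generalize π i = c at hv
      obtain ⟨c, hc⟩ := c
      obtain ⟨i, hi⟩ := i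
      simp only at hv
      simp only [St, zpos, opos, Nat.add_sub_cancel]
      split_ifs at * <;> first | (exfalso; omega) | (simp only [Option.some.injEq, Fin.mk.injEq]; omega)
  · intro c
    have h := hs c
    unfold subToPF
    generalize π.symm c = d at h
    obtain ⟨c, hc⟩ := c
    obtain ⟨d, hd⟩ := d
    simp only at h
    by_cases hex : ∃ q, (q, (⟨d, hd⟩ : Fin (m + 2))) ∈ ({((⟨0, by omega⟩ : Fin (m + 2)), (⟨m, by omega⟩ : Fin (m + 2))),
        ((⟨j - 1, by omega⟩ : Fin (m + 2)), (⟨m + 1, by omega⟩ : Fin (m + 2)))} :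
        Finset (Fin (m + 2) × Fin (m + 2)))
    · rw [dif_pos hex]
      have h3 := hex.choose_spec
      generalize hex.choose = q at h3
      obtain ⟨q, hq⟩ := q
      simp only [Finset.mem_insert, Finset.mem_singleton, Prod.mk.injEq, Fin.mk.injEq] at h3
      clear hex
      simp only
      split_ifs at * <;> omega
    · rw [dif_neg hex]
      have h4 : d ≠ m := by
        rintro rfl
        exact hex ⟨⟨0, by omega⟩, by simp⟩
      have h5 : d ≠ m + 1 := by
        rintro rfl
        exact hex ⟨⟨j - 1, by omega⟩, by simp⟩
      clear hex
      simp only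
      split_ifs at * <;> omega


end MVPPaper
end
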